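/- If an ellipsoid E ⊆ ℝ^m ⊗ ℝ^n is a tensorial body (i.e. Q₁ ⊗_π Q₂ ⊆ E ⊆ Q₁ ⊗_ε Q₂ for some 0-symmetric convex bodies Q₁ ⊆ ℝ^m, Q₂ ⊆ ℝ^n), then there exist linear isomorphisms T₁ : ℝ^m → ℝ^m and T₂ : ℝ^n → ℝ^n such that E = (T₁ ⊗ T₂)(B₂^{m,n}). -/

import Mathlib

open Set

/-- Outer product of two vectors, as an `m × n` matrix. -/
def outer {m n : ℕ} (x : Fin m → ℝ) (y : Fin n → ℝ) : Matrix (Fin m) (Fin n) ℝ :=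
  fun i j => x i * y j

/-- Hilbert–Schmidt (Frobenius) inner product on matrices. -/
def hsInner {m n : ℕ} (A B : Matrix (Fin m) (Fin n) ℝ) : ℝ := ∑ i, ∑ j, A i j * B i j

/-- Polar of a set of matrices w.r.t. the Hilbert–Schmidt inner product. -/
def polar {m n : ℕ} (C : Set (Matrix (Fin m) (Fin n) ℝ)) : Set (Matrix (Fin m) (Fin n) ℝ) :=
  {z | ∀ u ∈ C, |hsInner u z| ≤ 1}

/-- Polar of a set of vectors w.r.t. the standard inner product. -/
def polarVec {d : ℕ} (C : Set (Fin d → ℝ)) : Set (Fin d → ℝ) :=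
  {z | ∀ u ∈ C, |∑ i, u i * z i| ≤ 1}

/-- A 0-symmetric convex body: compact, convex, nonempty interior, symmetric. -/
def IsSymCB {E : Type*} [AddCommGroup E] [Module ℝ E] [TopologicalSpace E] (Q : Set E) : Prop :=
  IsCompact Q ∧ Convex ℝ Q ∧ (interior Q).Nonempty ∧ Q = -Q

/-- Projective tensor product of convex bodies. -/
def projTP {m n : ℕ} (Q₁ : Set (Fin m → ℝ)) (Q₂ : Set (Fin n → ℝ)) :
    Set (Matrix (Fin m) (Fin n) ℝ) :=
  convexHull ℝ {M | ∃ x ∈ Q₁, ∃ y ∈ Q₂, M = outer x y}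

/-- Injective tensor product of convex bodies. -/
def injTP {m n : ℕ} (Q₁ : Set (Fin m → ℝ)) (Q₂ : Set (Fin n → ℝ)) :
    Set (Matrix (Fin m) (Fin n) ℝ) :=
  polar (projTP (polarVec Q₁) (polarVec Q₂))

/-- A linear map on the matrix space, given by a big matrix indexed by pairs. -/
def act {m n : ℕ} (T : Matrix (Fin m × Fin n) (Fin m × Fin n) ℝ)
    (A : Matrix (Fin m) (Fin n) ℝ) : Matrix (Fin m) (Fin n) ℝ :=
  fun i j => ∑ q, T (i, j) q * A q.1 q.2

/-- The Hilbert–Schmidt unit ball of matrices. -/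
def hsBall (m n : ℕ) : Set (Matrix (Fin m) (Fin n) ℝ) := {A | hsInner A A ≤ 1}

/-- The Euclidean unit ball in ℝ^d. -/
def euclBall (d : ℕ) : Set (Fin d → ℝ) := {x | ∑ i, x i ^ 2 ≤ 1}


/-- The map `A ↦ T₁ A T₂ᵀ`, i.e. the tensor product `T₁ ⊗ T₂` acting on matrices. -/
def tmap {m n : ℕ} (T₁ : Matrix (Fin m) (Fin m) ℝ) (T₂ : Matrix (Fin n) (Fin n) ℝ)
    (A : Matrix (Fin m) (Fin n) ℝ) : Matrix (Fin m) (Fin n) ℝ :=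
  T₁ * A * T₂.transpose

open scoped Kronecker Matrix

/-- A set of vectors with nonempty interior contains the rows of an invertible matrix. -/
lemma exists_det_ne_zero_of_interior_nonempty {d : ℕ} {Q : Set (Fin d → ℝ)}
    (hQ : (interior Q).Nonempty) :
    ∃ B : Fin d → Fin d → ℝ, (∀ i, B i ∈ Q) ∧ (Matrix.of B).det ≠ 0 := by
  have hspan : ⊤ ≤ Submodule.span ℝ Q :=
    (Submodule.eq_top_of_nonempty_interior' _
      (hQ.mono (interior_mono Submodule.subset_span))).ge
  let b := Module.Basis.ofSpan hspan
  let b' := b.reindex (b.indexEquiv (Pi.basisFun ℝ (Fin d)))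
  refine ⟨b', fun i => ?_, ?_⟩
  · apply Module.Basis.ofSpan_subset hspan
    simp [b', b]
  · have hli : LinearIndependent ℝ (Matrix.of b').row := b'.linearIndependent
    exact ((Matrix.isUnit_iff_isUnit_det _).1
      (Matrix.linearIndependent_rows_iff_isUnit.1 hli)).ne_zero

/-- Auerbach's lemma: a compact set of vectors with nonempty interior contains a basis whose dual
basis lies in the polar. The basis consists of the rows of `B`, the dual basis of the columns
of `D`. -/
lemma exists_auerbach_basis {d : ℕ} {Q : Set (Fin d → ℝ)} (hc : IsCompact Q)
    (hQ : (interior Q).Nonempty) :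
    ∃ B D : Matrix (Fin d) (Fin d) ℝ,
      B * D = 1 ∧ (∀ i, B i ∈ Q) ∧ ∀ j, Dᵀ j ∈ polarVec Q := by
  obtain ⟨B₀, hB₀, hdet₀⟩ := exists_det_ne_zero_of_interior_nonempty hQ
  have hcont : Continuous fun B : Fin d → Fin d → ℝ => |(Matrix.of B).det| :=
    (Continuous.matrix_det (by exact continuous_id)).abs
  obtain ⟨B, hB, hmax⟩ := (isCompact_univ_pi fun _ : Fin d => hc).exists_isMaxOn
    ⟨B₀, fun i _ => hB₀ i⟩ hcont.continuousOn
  have hmax' : ∀ M : Matrix (Fin d) (Fin d) ℝ, (∀ i, M i ∈ Q) → |M.det| ≤ |(Matrix.of B).det| :=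
    fun M hM => hmax (a := M) fun i _ => hM i
  have hpos : 0 < |(Matrix.of B).det| := (abs_pos.2 hdet₀).trans_le (hmax' _ hB₀)
  have hunit : IsUnit (Matrix.of B).det := (abs_pos.1 hpos).isUnit
  refine ⟨Matrix.of B, (Matrix.of B)⁻¹, Matrix.mul_nonsing_inv _ hunit,
    fun i => hB i (mem_univ i), fun j x hx => ?_⟩
  have hcramer : (Matrix.of B).det * ∑ i, x i * (Matrix.of B)⁻¹ i j =
      ((Matrix.of B).updateRow j x).det := by
    rw [← Matrix.cramer_transpose_apply, Matrix.cramer_eq_adjugate_mulVec,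
      ← Matrix.adjugate_transpose, Matrix.mulVec_transpose, Matrix.inv_def, Matrix.vecMul,
      dotProduct, Finset.mul_sum]
    refine Finset.sum_congr rfl fun i _ => ?_
    rw [Matrix.smul_apply, smul_eq_mul, mul_left_comm, ← mul_assoc (Matrix.of B).det,
      Ring.mul_inverse_cancel _ hunit, one_mul]
  have hle : |((Matrix.of B).updateRow j x).det| ≤ |(Matrix.of B).det| := by
    refine hmax' _ fun i => ?_
    by_cases h : i = j
    · subst h
      rwa [show (Matrix.of B).updateRow i x i = x from Matrix.updateRow_self]
    · rw [show (Matrix.of B).updateRow j x i = B i from Matrix.updateRow_ne h]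
      exact hB i (mem_univ i)
  rw [← hcramer, abs_mul] at hle
  exact le_of_mul_le_mul_left (by simpa using hle) hpos

lemma hsInner_eq_dotProduct {m n : ℕ} (A B : Matrix (Fin m) (Fin n) ℝ) :
    hsInner A B = (fun q : Fin m × Fin n => A q.1 q.2) ⬝ᵥ fun q => B q.1 q.2 := by
  simp [hsInner, dotProduct, Fintype.sum_prod_type]

lemma act_mul {m n : ℕ} (S T : Matrix (Fin m × Fin n) (Fin m × Fin n) ℝ)
    (A : Matrix (Fin m) (Fin n) ℝ) : act (S * T) A = act S (act T A) := by
  ext i j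
  exact congrFun (Matrix.mulVec_mulVec (fun q => A q.1 q.2) S T).symm (i, j)

lemma act_one {m n : ℕ} (A : Matrix (Fin m) (Fin n) ℝ) : act 1 A = A := by
  ext i j
  exact congrFun (Matrix.one_mulVec fun q : Fin m × Fin n => A q.1 q.2) (i, j)

lemma act_kronecker {m n : ℕ} (T₁ : Matrix (Fin m) (Fin m) ℝ) (T₂ : Matrix (Fin n) (Fin n) ℝ) :
    act (T₁ ⊗ₖ T₂) = tmap T₁ T₂ := by
  ext A i j
  simp only [act, tmap, Matrix.mul_apply, Matrix.kronecker_apply, Matrix.transpose_apply,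
    Fintype.sum_prod_type, Finset.sum_mul]
  rw [Finset.sum_comm]
  exact Finset.sum_congr rfl fun _ _ => Finset.sum_congr rfl fun _ _ => by ring

lemma hsInner_act {m n : ℕ} (T : Matrix (Fin m × Fin n) (Fin m × Fin n) ℝ)
    (A B : Matrix (Fin m) (Fin n) ℝ) : hsInner (act T A) B = hsInner A (act Tᵀ B) := by
  rw [hsInner_eq_dotProduct, hsInner_eq_dotProduct]
  change (T *ᵥ fun q => A q.1 q.2) ⬝ᵥ _ = _ ⬝ᵥ (Tᵀ *ᵥ fun q => B q.1 q.2)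
  rw [Matrix.mulVec_transpose, dotProduct_comm, Matrix.dotProduct_mulVec, dotProduct_comm]

/-- Orthogonal maps preserve the Hilbert–Schmidt ball. -/
lemma act_image_hsBall_of_transpose_mul_self {m n : ℕ}
    {P : Matrix (Fin m × Fin n) (Fin m × Fin n) ℝ} (hP : Pᵀ * P = 1) :
    act P '' hsBall m n = hsBall m n := by
  have hmem : ∀ {S : Matrix (Fin m × Fin n) (Fin m × Fin n) ℝ}, Sᵀ * S = 1 →
      ∀ A ∈ hsBall m n, act S A ∈ hsBall m n := fun hS A hA => by
    rwa [hsBall, mem_ofPred_eq, hsInner_act, ← act_mul, hS, act_one]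
  have hP' : P * Pᵀ = 1 := mul_eq_one_comm.1 hP
  refine Subset.antisymm (image_subset_iff.2 fun A hA => hmem hP A hA) fun A hA => ?_
  exact ⟨act Pᵀ A, hmem (by rwa [Matrix.transpose_transpose]) A hA, by
    rw [← act_mul, hP', act_one]⟩

/-- If `T` maps the Hilbert–Schmidt ball into the slab `|⟨·, W⟩| ≤ 1`, then `Tᵀ W` lies in the
Hilbert–Schmidt ball. -/
lemma act_transpose_mem_hsBall {m n : ℕ} {T : Matrix (Fin m × Fin n) (Fin m × Fin n) ℝ}
    {W : Matrix (Fin m) (Fin n) ℝ} (h : ∀ A ∈ hsBall m n, |hsInner W (act T A)| ≤ 1) :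
    act Tᵀ W ∈ hsBall m n := by
  have hcomm : ∀ A B : Matrix (Fin m) (Fin n) ℝ, hsInner A B = hsInner B A := fun A B => by
    rw [hsInner_eq_dotProduct, hsInner_eq_dotProduct, dotProduct_comm]
  have hsmul : ∀ (c : ℝ) (A B : Matrix (Fin m) (Fin n) ℝ),
      hsInner (c • A) B = c * hsInner A B := fun c A B => by
    simp [hsInner, Finset.mul_sum, mul_assoc]
  rw [hsBall, mem_ofPred_eq]
  set R := act Tᵀ W
  by_contra! hs
  set s := hsInner R R
  have hs0 : 0 < √s := Real.sqrt_pos.2 (by linarith)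
  have hss : √s * √s = s := Real.mul_self_sqrt (by linarith)
  have hball : (√s)⁻¹ • R ∈ hsBall m n := by
    rw [hsBall, mem_ofPred_eq, hsmul, hcomm, hsmul]
    change (√s)⁻¹ * ((√s)⁻¹ * s) ≤ 1
    rw [← mul_assoc, ← mul_inv, hss, inv_mul_cancel₀ (by linarith)]
  have key := h _ hball
  rw [hcomm, hsInner_act, hsmul] at key
  change |(√s)⁻¹ * s| ≤ 1 at key
  have hval : (√s)⁻¹ * s = √s := by
    rw [inv_mul_eq_iff_eq_mul₀ hs0.ne', hss]
  rw [hval, abs_of_pos hs0] at key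
  nlinarith

/-- Matrices whose columns lie in the Euclidean unit ball and which are biorthogonal coincide. -/
lemma eq_of_transpose_mul_eq_one_of_columns_le {ι : Type*} [Fintype ι] [DecidableEq ι]
    {P R : Matrix ι ι ℝ} (h : Pᵀ * R = 1) (hP : ∀ k, ∑ l, P l k * P l k ≤ 1)
    (hR : ∀ k, ∑ l, R l k * R l k ≤ 1) : P = R := by
  ext l k
  have hk : ∑ l, P l k * R l k = 1 := by
    simpa [Matrix.mul_apply] using congrFun (congrFun h k) k
  have hsum : ∑ l, (P l k - R l k) ^ 2 ≤ 0 := by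
    have hexp : ∑ l, (P l k - R l k) ^ 2 =
        ∑ l, P l k * P l k + ∑ l, R l k * R l k - 2 * ∑ l, P l k * R l k := by
      rw [Finset.mul_sum, ← Finset.sum_add_distrib, ← Finset.sum_sub_distrib]
      exact Finset.sum_congr rfl fun _ _ => by ring
    linarith [hP k, hR k]
  have hl : (P l k - R l k) ^ 2 ≤ 0 :=
    (Finset.single_le_sum (f := fun l => (P l k - R l k) ^ 2) (fun _ _ => sq_nonneg _)
      (Finset.mem_univ l)).trans hsum
  exact sub_eq_zero.1 (pow_eq_zero_iff two_ne_zero |>.1 (le_antisymm hl (sq_nonneg _)))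

theorem tensorial_ellipsoid_is_hilbertian (m n : ℕ)
    (E : Set (Matrix (Fin m) (Fin n) ℝ))
    (hell : ∃ T : Matrix (Fin m × Fin n) (Fin m × Fin n) ℝ, IsUnit T ∧ E = act T '' hsBall m n)
    (htens : ∃ (Q₁ : Set (Fin m → ℝ)) (Q₂ : Set (Fin n → ℝ)), IsSymCB Q₁ ∧ IsSymCB Q₂ ∧
      projTP Q₁ Q₂ ⊆ E ∧ E ⊆ injTP Q₁ Q₂) :
    ∃ (T₁ : Matrix (Fin m) (Fin m) ℝ) (T₂ : Matrix (Fin n) (Fin n) ℝ),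
      IsUnit T₁ ∧ IsUnit T₂ ∧ E = tmap T₁ T₂ '' hsBall m n := by
  obtain ⟨T, hT, rfl⟩ := hell
  obtain ⟨Q₁, Q₂, hQ₁, hQ₂, hproj, hinj⟩ := htens
  obtain ⟨B, D, hBD, hB, hD⟩ := exists_auerbach_basis hQ₁.1 hQ₁.2.2.1
  obtain ⟨C, F, hCF, hC, hF⟩ := exists_auerbach_basis hQ₂.1 hQ₂.2.2.1
  have hTdet : IsUnit T.det := (Matrix.isUnit_iff_isUnit_det T).1 hT
  have hTT : T⁻¹ * T = 1 := Matrix.nonsing_inv_mul T hTdet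
  have hTT' : T * T⁻¹ = 1 := Matrix.mul_nonsing_inv T hTdet
  have hcol : ∀ (S M : Matrix (Fin m × Fin n) (Fin m × Fin n) ℝ) (k : Fin m × Fin n),
      act S (fun i j => M (i, j) k) = fun i j => (S * M) (i, j) k := fun _ _ _ => rfl
  have hbiorth : (T⁻¹ * (Bᵀ ⊗ₖ Cᵀ))ᵀ * (Tᵀ * (D ⊗ₖ F)) = 1 := by
    rw [Matrix.transpose_mul, Matrix.mul_assoc, ← Matrix.mul_assoc (T⁻¹)ᵀ, ← Matrix.transpose_mul,
      hTT', Matrix.transpose_one, Matrix.one_mul, ← Matrix.kroneckerMap_transpose,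
      Matrix.transpose_transpose, Matrix.transpose_transpose, ← Matrix.mul_kronecker_mul, hBD, hCF,
      Matrix.one_kronecker_one]
  have hPR : T⁻¹ * (Bᵀ ⊗ₖ Cᵀ) = Tᵀ * (D ⊗ₖ F) := by
    refine eq_of_transpose_mul_eq_one_of_columns_le hbiorth (fun k => ?_) fun k => ?_
    · obtain ⟨A, hA, hAeq⟩ := hproj (subset_convexHull ℝ _ ⟨B k.1, hB _, C k.2, hC _, rfl⟩)
      have hA' : A = fun i j => (T⁻¹ * (Bᵀ ⊗ₖ Cᵀ)) (i, j) k := by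
        rw [← hcol, ← act_one A, ← hTT, act_mul, hAeq]
        rfl
      rw [hsBall, mem_ofPred_eq, hsInner_eq_dotProduct, hA'] at hA
      exact hA
    · have hmem : act Tᵀ (outer (Dᵀ k.1) (Fᵀ k.2)) ∈ hsBall m n :=
        act_transpose_mem_hsBall fun A hA => hinj (mem_image_of_mem _ hA) _
          (subset_convexHull ℝ _ ⟨_, hD k.1, _, hF k.2, rfl⟩)
      rw [hsBall, mem_ofPred_eq, hsInner_eq_dotProduct] at hmem
      exact hmem
  refine ⟨Bᵀ, Cᵀ, ?_, ?_, ?_⟩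
  · exact (Matrix.isUnit_transpose _).2 (IsUnit.of_mul_eq_one _ hBD)
  · exact (Matrix.isUnit_transpose _).2 (IsUnit.of_mul_eq_one _ hCF)
  · have horth : (T⁻¹ * (Bᵀ ⊗ₖ Cᵀ))ᵀ * (T⁻¹ * (Bᵀ ⊗ₖ Cᵀ)) = 1 := by
      rw [← hPR] at hbiorth
      exact hbiorth
    have hfactor : tmap Bᵀ Cᵀ = act T ∘ act (T⁻¹ * (Bᵀ ⊗ₖ Cᵀ)) := by
      funext A
      rw [Function.comp_apply, ← act_mul, ← Matrix.mul_assoc, hTT', Matrix.one_mul, act_kronecker]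
    rw [hfactor, image_comp, act_image_hsBall_of_transpose_mul_self horth]
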